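/- Under Assumption (A), let K ⊆ Γ_∞ be a compact subset. (i) If f_∞ ≡ +∞ on Γ_∞, then for every B > 0 there exists R₀ > 0 such that for every λ ∈ K and every λ̃ in the closed positive orthant Γ̄ₙ with |λ̃| ≥ R₀, one has λ + λ̃ ∈ Γ and f(λ + λ̃) ≥ B. (ii) If f_∞ is finite at every point of Γ_∞, then for every ε > 0 there exists R₀ > 0 such that for every λ ∈ K and every λ̃ ∈ Γ̄ₙ with |λ̃| ≥ R₀, one has λ + λ̃ ∈ Γ and f(λ + λ̃) ≥ f_∞(λ) − ε. -/

import Mathlib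

open Filter

/-- Assumption (A) from the paper: `Γ ⊆ ℝⁿ` is an open convex symmetric cone with
`Γₙ ⊆ Γ ⊆ Γ₁`, and `f : Γ → (0,∞)` is smooth, symmetric, concave, with positive partial
derivatives, vanishing at the boundary of `Γ`, and `f(Rλ) → +∞` as `R → +∞`. -/
structure AssumptionA (n : ℕ) (Γ : Set (Fin n → ℝ)) (f : (Fin n → ℝ) → ℝ) : Prop where
  isOpen : IsOpen Γ
  convex : Convex ℝ Γ
  cone : ∀ x ∈ Γ, ∀ t : ℝ, 0 < t → t • x ∈ Γ
  perm_invariant : ∀ x ∈ Γ, ∀ σ : Equiv.Perm (Fin n), (fun i => x (σ i)) ∈ Γ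
  orthant_subset : {x : Fin n → ℝ | ∀ i, 0 < x i} ⊆ Γ
  subset_halfspace : Γ ⊆ {x : Fin n → ℝ | 0 < ∑ i, x i}
  f_pos : ∀ x ∈ Γ, 0 < f x
  f_smooth : ContDiffOn ℝ (⊤ : ℕ∞) f Γ
  f_perm_invariant : ∀ x ∈ Γ, ∀ σ : Equiv.Perm (Fin n), f (fun i => x (σ i)) = f x
  f_concave : ConcaveOn ℝ Γ f
  f_deriv_pos : ∀ x ∈ Γ, ∀ i : Fin n, 0 < fderiv ℝ f x (Pi.single i 1)
  f_boundary_zero : ∀ x₀ ∈ frontier Γ, Tendsto f (nhdsWithin x₀ Γ) (nhds 0)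
  f_proper : ∀ x ∈ Γ, Tendsto (fun R : ℝ => f (R • x)) atTop atTop

/-- `Γ_∞`: the set of `λ ∈ ℝⁿ` such that for every `i`, replacing the `i`-th coordinate by any
sufficiently large `R` lands in `Γ`. -/
def GammaInfty (n : ℕ) (Γ : Set (Fin n → ℝ)) : Set (Fin n → ℝ) :=
  {x | ∀ i : Fin n, ∃ R₀ : ℝ, ∀ R ≥ R₀, Function.update x i R ∈ Γ}

/-- `f_{∞,i}(λ) = lim_{R→+∞} f(λ₁,…,λ_{i−1},R,λ_{i+1},…,λₙ)`, realized as a limsup in `EReal`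
(the limit exists in `(0,+∞]` since `f` is increasing in `λᵢ`). -/
noncomputable def fInftyi (n : ℕ) (f : (Fin n → ℝ) → ℝ) (i : Fin n) (x : Fin n → ℝ) : EReal :=
  Filter.limsup (fun R : ℝ => ((f (Function.update x i R) : ℝ) : EReal)) Filter.atTop

/-- `f_∞(λ) = min_{1 ≤ i ≤ n} f_{∞,i}(λ)`, with values in `(0,+∞]`. -/
noncomputable def fInfty (n : ℕ) (f : (Fin n → ℝ) → ℝ) (x : Fin n → ℝ) : EReal :=
  ⨅ i : Fin n, fInftyi n f i x

namespace AssumptionA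

variable {n : ℕ} {Γ : Set (Fin n → ℝ)} {f : (Fin n → ℝ) → ℝ}

lemma npos (hA : AssumptionA n Γ f) : 0 < n := by
  rcases Nat.eq_zero_or_pos n with h | h
  · subst h
    have h1 : (0 : Fin 0 → ℝ) ∈ Γ := hA.orthant_subset (fun i => i.elim0)
    have h2 := hA.subset_halfspace h1
    simp at h2
  · exact h

lemma add_mem' (hA : AssumptionA n Γ f) {x y : Fin n → ℝ} (hx : x ∈ Γ) (hy : y ∈ Γ) :
    x + y ∈ Γ := by
  have h := hA.convex hx hy (a := 1/2) (b := 1/2) (by norm_num) (by norm_num) (by norm_num)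
  have h2 := hA.cone _ h 2 (by norm_num)
  convert h2 using 1
  ext i
  simp
  ring

lemma add_nonneg_mem (hA : AssumptionA n Γ f) {x y : Fin n → ℝ} (hx : x ∈ Γ)
    (hy : ∀ i, 0 ≤ y i) : x + y ∈ Γ := by
  have hc : Tendsto (fun δ : ℝ => x - δ • (1 : Fin n → ℝ)) (nhds 0) (nhds x) := by
    have : Continuous (fun δ : ℝ => x - δ • (1 : Fin n → ℝ)) := by fun_prop
    simpa using this.tendsto 0
  have h1 : ∀ᶠ δ : ℝ in nhdsWithin 0 (Set.Ioi 0), x - δ • (1 : Fin n → ℝ) ∈ Γ :=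
    (hc.eventually (hA.isOpen.mem_nhds hx)).filter_mono nhdsWithin_le_nhds
  obtain ⟨δ, h2, h3⟩ := (h1.and self_mem_nhdsWithin).exists
  have h3 : 0 < δ := h3
  have h4 : y + δ • (1 : Fin n → ℝ) ∈ Γ := hA.orthant_subset (fun i => by
    have := hy i
    simp
    linarith)
  have := hA.add_mem' h2 h4
  convert this using 1
  abel

lemma mono (hA : AssumptionA n Γ f) {x y : Fin n → ℝ} (hx : x ∈ Γ)
    (hy : ∀ i, 0 ≤ y i) : f x ≤ f (x + y) := by
  have key : ∀ t : ℝ, 0 < t → t < 1 → (1 - t) * f x ≤ f (x + y) := by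
    intro t ht ht1
    have hz : x + t⁻¹ • y ∈ Γ := hA.add_nonneg_mem hx (fun i => by
      have := hy i
      simp
      positivity)
    have h := hA.f_concave.2 hx hz (sub_nonneg.2 ht1.le) ht.le (sub_add_cancel 1 t)
    have e : (1 - t) • x + t • (x + t⁻¹ • y) = x + y := by
      ext i
      simp
      field_simp
      ring
    rw [e] at h
    have := hA.f_pos _ hz
    simp only [smul_eq_mul] at h
    nlinarith
  have hc : Tendsto (fun t : ℝ => (1 - t) * f x) (nhdsWithin 0 (Set.Ioi 0)) (nhds (f x)) := by
    have : Continuous (fun t : ℝ => (1 - t) * f x) := by fun_prop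
    have h := this.tendsto 0
    simp only [sub_zero, one_mul] at h
    exact h.mono_left nhdsWithin_le_nhds
  refine le_of_tendsto hc ?_
  filter_upwards [Ioo_mem_nhdsGT (zero_lt_one' ℝ)] with t ht
  exact key t ht.1 ht.2

lemma single_mono (hA : AssumptionA n Γ f) {x : Fin n → ℝ} {i : Fin n} {s t : ℝ} (hst : s ≤ t)
    (hx : x + Pi.single i s ∈ Γ) :
    x + Pi.single i t ∈ Γ ∧ f (x + Pi.single i s) ≤ f (x + Pi.single i t) := by
  have e : x + Pi.single i t = (x + Pi.single i s) + Pi.single i (t - s) := by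
    rw [add_assoc, ← Pi.single_add]
    simp
  have hy : ∀ j, 0 ≤ (Pi.single i (t - s) : Fin n → ℝ) j := by
    intro j
    by_cases h : j = i
    · subst h
      simpa using hst
    · simp [h]
  rw [e]
  exact ⟨hA.add_nonneg_mem hx hy, hA.mono hx hy⟩

lemma upd (x : Fin n → ℝ) (i : Fin n) (R : ℝ) :
    Function.update x i R = x + Pi.single i (R - x i) := by
  ext j
  by_cases h : j = i
  · subst h
    simp
  · simp [h]

lemma localA (hA : AssumptionA n Γ f) {x₀ : Fin n → ℝ} (hx : x₀ ∈ GammaInfty n Γ) (i : Fin n)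
    {c : ℝ} (hc : (c : EReal) < fInftyi n f i x₀) :
    ∃ S, ∀ᶠ x in nhds x₀, ∀ s ≥ S, x + Pi.single i s ∈ Γ ∧ c < f (x + Pi.single i s) := by
  obtain ⟨R₀, hR⟩ := hx i
  have h1 := frequently_lt_of_lt_limsup (by isBoundedDefault) hc
  obtain ⟨R, h2, h3⟩ := (h1.and_eventually (eventually_ge_atTop R₀)).exists
  have h4 := hR R h3
  have h5 : c < f (Function.update x₀ i R) := by exact_mod_cast h2
  rw [upd] at h4 h5
  set S := R - x₀ i
  refine ⟨S, ?_⟩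
  have hca : ContinuousAt f (x₀ + Pi.single i S) :=
    hA.f_smooth.continuousOn.continuousAt (hA.isOpen.mem_nhds h4)
  have ht : Tendsto (fun x : Fin n → ℝ => x + Pi.single i S) (nhds x₀)
      (nhds (x₀ + Pi.single i S)) :=
    (continuous_id.add continuous_const).tendsto x₀
  filter_upwards [ht.eventually (hA.isOpen.mem_nhds h4),
    ht.eventually (hca.eventually (lt_mem_nhds h5))] with x a b s hs
  have := hA.single_mono hs a
  exact ⟨this.1, b.trans_le this.2⟩

lemma le_fInftyi (hA : AssumptionA n Γ f) {x : Fin n → ℝ} {i : Fin n} {s : ℝ}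
    (hx : x + Pi.single i s ∈ Γ) : ((f (x + Pi.single i s) : ℝ) : EReal) ≤ fInftyi n f i x := by
  refine le_limsup_of_frequently_le (Eventually.frequently ?_) (by isBoundedDefault)
  filter_upwards [eventually_ge_atTop (s + x i)] with R hR
  rw [upd]
  exact_mod_cast (hA.single_mono (by linarith) hx).2

lemma fInftyi_pos (hA : AssumptionA n Γ f) {x : Fin n → ℝ} (hx : x ∈ GammaInfty n Γ)
    (i : Fin n) : 0 < fInftyi n f i x := by
  obtain ⟨R, hR⟩ := hx i
  have h := hR R le_rfl
  rw [upd] at h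
  exact lt_of_lt_of_le (by exact_mod_cast hA.f_pos _ h) (hA.le_fInftyi h)

/-- upper semicontinuity of `fInftyi` -/
lemma usc (hA : AssumptionA n Γ f) {x₀ : Fin n → ℝ} (hx : x₀ ∈ GammaInfty n Γ) (i : Fin n)
    {c d : ℝ} (hc : fInftyi n f i x₀ = (c : EReal)) (hcd : c < d) :
    ∀ᶠ x in nhds x₀, fInftyi n f i x ≤ (d : EReal) := by
  have hc0 : 0 < c := by
    have := hA.fInftyi_pos hx i
    rw [hc] at this
    exact_mod_cast this
  have hd0 : 0 < d := hc0.trans hcd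
  obtain ⟨S, hS⟩ := hA.localA hx i (c := 0) (by simpa using hA.fInftyi_pos hx i)
  -- (1 - t) = c / d
  set u : ℝ := c / d with hu
  have hu0 : 0 < u := by positivity
  have hu1 : u < 1 := (div_lt_one hd0).2 hcd
  have hz : Tendsto (fun x : Fin n → ℝ => (1 - u)⁻¹ • (x₀ - u • x)) (nhds x₀) (nhds x₀) := by
    have hcont : Continuous (fun x : Fin n → ℝ => (1 - u)⁻¹ • (x₀ - u • x)) := by fun_prop
    have h := hcont.tendsto x₀
    have e : (1 - u)⁻¹ • (x₀ - u • x₀) = x₀ := by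
      have : (1 - u) ≠ 0 := by linarith
      ext j
      simp
      field_simp
    rwa [e] at h
  filter_upwards [hS, hz.eventually hS] with x h1 h2
  refine limsup_le_of_le (by isBoundedDefault) ?_
  filter_upwards [eventually_ge_atTop (S + x i)] with R hR
  rw [upd]
  set s := R - x i
  have hs : S ≤ s := by
    simp only [s]
    linarith
  obtain ⟨a1, a2⟩ := h1 s hs
  obtain ⟨b1, b2⟩ := h2 s hs
  have hmem := hA.convex a1 b1 (a := u) (b := 1 - u) hu0.le (by linarith) (by ring)
  have hcv := hA.f_concave.2 a1 b1 hu0.le (sub_nonneg.2 hu1.le) (add_sub_cancel u 1)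
  have e : u • (x + Pi.single i s) + (1 - u) • ((1 - u)⁻¹ • (x₀ - u • x) + Pi.single i s)
      = x₀ + Pi.single i s := by
    have : (1 - u) ≠ 0 := by linarith
    ext j
    simp
    field_simp
    ring
  rw [e] at hmem hcv
  have h3 := hA.le_fInftyi hmem
  rw [hc] at h3
  have h3 : f (x₀ + Pi.single i s) ≤ c := by exact_mod_cast h3
  simp only [smul_eq_mul] at hcv
  have h4 : u * f (x + Pi.single i s) ≤ c := by nlinarith
  have h5 : f (x + Pi.single i s) ≤ d := by
    rw [hu, div_mul_eq_mul_div, div_le_iff₀ hd0] at h4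
    exact le_of_mul_le_mul_left h4 hc0
  exact_mod_cast h5

lemma main (hA : AssumptionA n Γ f) {K : Set (Fin n → ℝ)} (hK : IsCompact K)
    (g : (Fin n → ℝ) → ℝ)
    (h : ∀ x₀ ∈ K, ∀ i, ∃ S, ∀ᶠ x in nhds x₀, ∀ s ≥ S,
      x + Pi.single i s ∈ Γ ∧ g x ≤ f (x + Pi.single i s)) :
    ∃ R₀ : ℝ, 0 < R₀ ∧ ∀ x ∈ K, ∀ y : Fin n → ℝ, (∀ i, 0 ≤ y i) →
          R₀ ≤ Real.sqrt (∑ i, y i ^ 2) → x + y ∈ Γ ∧ g x ≤ f (x + y) := by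
  have hU : ∃ S, ∀ x ∈ K, ∀ i, ∀ s ≥ S,
      x + Pi.single i s ∈ Γ ∧ g x ≤ f (x + Pi.single i s) := by
    refine hK.induction_on (p := fun A => ∃ S, ∀ x ∈ A, ∀ i, ∀ s ≥ S,
      x + Pi.single i s ∈ Γ ∧ g x ≤ f (x + Pi.single i s)) ?_ ?_ ?_ ?_
    · exact ⟨0, by simp⟩
    · rintro A B hAB ⟨S, hS⟩
      exact ⟨S, fun x hx => hS x (hAB hx)⟩
    · rintro A B ⟨S, hS⟩ ⟨T, hT⟩
      refine ⟨max S T, ?_⟩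
      rintro x (hx | hx) i s hs
      · exact hS x hx i s ((le_max_left _ _).trans hs)
      · exact hT x hx i s ((le_max_right _ _).trans hs)
    · intro x₀ hx₀
      choose S hS using h x₀ hx₀
      obtain ⟨M, hM⟩ := Finite.exists_le S
      refine ⟨_, mem_nhdsWithin_of_mem_nhds (eventually_all.2 hS), M, ?_⟩
      intro x hx i s hs
      exact hx i s ((hM i).trans hs)
  obtain ⟨S, hS⟩ := hU
  set T := max S 1
  have hT1 : 1 ≤ T := le_max_right _ _
  have hTS : S ≤ T := le_max_left _ _
  refine ⟨(n + 1) * T, by positivity, ?_⟩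
  intro x hx y hy hR
  have hi : ∃ i, T ≤ y i := by
    by_contra! hcon
    have h1 : ∑ i, y i ^ 2 ≤ ∑ i : Fin n, T ^ 2 :=
      Finset.sum_le_sum fun i _ => pow_le_pow_left₀ (hy i) (hcon i).le 2
    have h2 := (Real.le_sqrt' (by positivity)).1 hR
    simp at h1
    have h3 : (0:ℝ) ≤ n := by positivity
    nlinarith [mul_nonneg h3 (sq_nonneg T), mul_nonneg (mul_nonneg h3 h3) (sq_nonneg T)]
  obtain ⟨i, hi⟩ := hi
  obtain ⟨h1, h2⟩ := hS x hx i (y i) (hTS.trans hi)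
  have e : x + y = (x + Pi.single i (y i)) + Function.update y i 0 := by
    ext j
    by_cases h : j = i
    · subst h
      simp
    · simp [h]
  have hy' : ∀ j, 0 ≤ Function.update y i 0 j := by
    intro j
    by_cases h : j = i
    · subst h
      simp
    · simpa [h] using hy j
  rw [e]
  exact ⟨hA.add_nonneg_mem h1 hy', h2.trans (hA.mono h1 hy')⟩

end AssumptionA

/-- Lemma 2.9 (2),(3) of the paper: for a compact `K ⊆ Γ_∞`:
(i) if `f_∞ ≡ +∞` on `Γ_∞`, then for every `B > 0` there is `R₀ > 0` such that
`λ + λ̃ ∈ Γ` and `f(λ + λ̃) ≥ B` whenever `λ ∈ K` and `λ̃ ∈ Γ̄ₙ` with `|λ̃| ≥ R₀`;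
(ii) if `f_∞ < +∞` on `Γ_∞`, then for every `ε > 0` there is `R₀ > 0` such that
`λ + λ̃ ∈ Γ` and `f(λ + λ̃) ≥ f_∞(λ) − ε` whenever `λ ∈ K` and `λ̃ ∈ Γ̄ₙ` with `|λ̃| ≥ R₀`. -/
theorem stmt_6 (n : ℕ) (Γ : Set (Fin n → ℝ)) (f : (Fin n → ℝ) → ℝ)
    (hA : AssumptionA n Γ f)
    (K : Set (Fin n → ℝ)) (hKsub : K ⊆ GammaInfty n Γ) (hK : IsCompact K) :
    ((∀ x ∈ GammaInfty n Γ, fInfty n f x = ⊤) →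
      ∀ B : ℝ, 0 < B → ∃ R₀ : ℝ, 0 < R₀ ∧
        ∀ x ∈ K, ∀ y : Fin n → ℝ, (∀ i, 0 ≤ y i) →
          R₀ ≤ Real.sqrt (∑ i, y i ^ 2) → x + y ∈ Γ ∧ B ≤ f (x + y)) ∧
    ((∀ x ∈ GammaInfty n Γ, fInfty n f x ≠ ⊤) →
      ∀ ε : ℝ, 0 < ε → ∃ R₀ : ℝ, 0 < R₀ ∧
        ∀ x ∈ K, ∀ y : Fin n → ℝ, (∀ i, 0 ≤ y i) →
          R₀ ≤ Real.sqrt (∑ i, y i ^ 2) →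
            x + y ∈ Γ ∧ (fInfty n f x).toReal - ε ≤ f (x + y)) := by
  constructor
  · intro htop B hB
    refine hA.main hK (fun _ => B) ?_
    intro x₀ hx₀ i
    have h1 : fInftyi n f i x₀ = ⊤ := iInf_eq_top.1 (htop x₀ (hKsub hx₀)) i
    obtain ⟨S, hS⟩ := hA.localA (hKsub hx₀) i (c := B) (by rw [h1]; exact EReal.coe_lt_top B)
    exact ⟨S, hS.mono fun x hx s hs => ⟨(hx s hs).1, (hx s hs).2.le⟩⟩
  · intro hfin ε hε
    refine hA.main hK (fun x => (fInfty n f x).toReal - ε) ?_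
    intro x₀ hx₀ i
    have hxG := hKsub hx₀
    haveI : Nonempty (Fin n) := ⟨⟨0, hA.npos⟩⟩
    obtain ⟨j, hj⟩ := exists_eq_ciInf_of_finite (f := fun i => fInftyi n f i x₀)
    have hj : fInftyi n f j x₀ = fInfty n f x₀ := hj
    have hpos := hA.fInftyi_pos hxG j
    have hne : fInftyi n f j x₀ ≠ ⊤ := hj ▸ hfin x₀ hxG
    obtain ⟨c, hc⟩ : ∃ c : ℝ, fInftyi n f j x₀ = (c : EReal) :=
      ⟨_, (EReal.coe_toReal hne (ne_bot_of_gt hpos)).symm⟩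
    have hc0 : 0 < c := by
      rw [hc] at hpos
      exact_mod_cast hpos
    have husc := hA.usc hxG j hc (d := c + ε / 2) (by linarith)
    have hlt : ((c - ε / 2 : ℝ) : EReal) < fInftyi n f i x₀ := by
      have h1 : (c : EReal) ≤ fInftyi n f i x₀ := by
        rw [← hc, hj]
        exact iInf_le _ i
      refine lt_of_lt_of_le ?_ h1
      exact EReal.coe_lt_coe_iff.2 (by linarith)
    obtain ⟨S, hS⟩ := hA.localA hxG i hlt
    refine ⟨S, ?_⟩
    filter_upwards [hS, husc] with x h1 h2 s hs
    refine ⟨(h1 s hs).1, ?_⟩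
    have h3 : fInfty n f x ≤ ((c + ε / 2 : ℝ) : EReal) := (iInf_le _ j).trans h2
    have h4 : (fInfty n f x).toReal ≤ c + ε / 2 := by
      by_cases hb : fInfty n f x = ⊥
      · rw [hb]
        simp
        linarith
      · have := EReal.toReal_le_toReal h3 hb (EReal.coe_ne_top _)
        rwa [EReal.toReal_coe] at this
    have := (h1 s hs).2
    linarith
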